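/- Let t0 > 0, let λ ≥ 0, and let b(t) := (a + r·sin(t^α))/t for t ≥ t0, where a > 0, 0 ≤ r ≤ a and α > 1. Set μ := min{a, 2}, B := 3r/(α·t0^α), and Γ2 := exp( a(a+r+8) + 5r(a+r+4)/2 + 3r/(α·t0^α) + r·log 3/(α−1) ). Then every solution u of the damped oscillator equation u'' + b(t)u' + λ²u = 0 satisfies u'(t)² + λ²u(t)² ≤ Γ2·{4e^{2B}u'(t0)² + (λ² + 2/t0²)u(t0)²}·(t0/t)^μ for every t ≥ t0. -/

import Mathlib

open Real Set Filter MeasureTheory intervalIntegral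

/-- A solution of the damped oscillator equation `u'' + b(t) u' + λ² u = 0` on `[t0, ∞)`:
a `C¹` function `u` (with derivative `u'`) whose derivative is locally absolutely continuous
(i.e. it is the integral of a locally integrable function `w`) and which satisfies the
equation almost everywhere on `[t0, ∞)`. -/
def IsDampedSol (t0 : ℝ) (b : ℝ → ℝ) (lam : ℝ) (u u' : ℝ → ℝ) : Prop :=
  (∀ t ∈ Ici t0, HasDerivAt u (u' t) t) ∧
  ContinuousOn u' (Ici t0) ∧
  ∃ w : ℝ → ℝ,
    (∀ T ≥ t0, IntervalIntegrable w volume t0 T) ∧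
    (∀ t ∈ Ici t0, u' t = u' t0 + ∫ s in t0..t, w s) ∧
    (∀ᵐ t ∂(volume.restrict (Ici t0)), w t + b t * u' t + lam ^ 2 * u t = 0)

/-!
In polar coordinates `u' = √E cos θ`, `λ u = √E sin θ` the energy `E = u'² + λ² u²` satisfies
`(log E)' = -b (1 + cos 2θ)` and `θ' = λ + O(1/t)`.

As long as `λ t ≥ 1/2`, expand `b (1 + cos 2θ)`: besides `a / t`, which gives the decay `t ^ (-a)`,
it consists of `1 / t` times oscillations with the phases `2θ`, `t ^ α` and `t ^ α ± 2θ`. Each has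
a bounded integral by the first-derivative test for oscillatory integrals. The only stationary
phase is that of `t ^ α - 2θ`, near `α t ^ (α - 1) = 2 λ`; around it one uses the trivial bound
`1 / t` on a window of logarithmic length `log 3 / (α - 1)`.

As long as `λ t ≤ 1/2`, the force `λ² u` is a small perturbation: the velocity decays like
`exp (-∫ b)`, and the position stays within a bounded multiple of its initial data, which is enough
because `λ² ≤ t⁻² / 4` supplies the decay `t ^ (-2)`.
-/

section OscillatoryIntegrals

variable {x y : ℝ}

theorem sub_le_integral_of_hasDerivWithinAt_Icc_le {F F' g : ℝ → ℝ} (hxy : x ≤ y)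
    (hF : ∀ t ∈ Icc x y, HasDerivWithinAt F (F' t) (Icc x y) t)
    (hg : ContinuousOn g (Icc x y)) (hle : ∀ t ∈ Icc x y, F' t ≤ g t) :
    F y - F x ≤ ∫ t in x..y, g t :=
  sub_le_integral_of_hasDeriv_right_of_le hxy (fun t ht => (hF t ht).continuousWithinAt)
    (fun t ht => ((hF t (Ioo_subset_Icc_self ht)).hasDerivAt
      (Icc_mem_nhds ht.1 ht.2)).hasDerivWithinAt)
    hg.integrableOn_Icc (fun t ht => hle t (Ioo_subset_Icc_self ht))

theorem integral_eq_sub_of_hasDerivWithinAt_Icc {F F' : ℝ → ℝ} (hxy : x ≤ y)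
    (hF : ∀ t ∈ Icc x y, HasDerivWithinAt F (F' t) (Icc x y) t)
    (hF' : ContinuousOn F' (Icc x y)) : ∫ t in x..y, F' t = F y - F x :=
  integral_eq_sub_of_hasDerivAt_of_le hxy (fun t ht => (hF t ht).continuousWithinAt)
    (fun t ht => (hF t (Ioo_subset_Icc_self ht)).hasDerivAt (Icc_mem_nhds ht.1 ht.2))
    (hF'.intervalIntegrable_of_Icc hxy)

theorem hasDerivWithinAt_integral_Icc {g : ℝ → ℝ} (hg : ContinuousOn g (Icc x y)) {t : ℝ}
    (ht : t ∈ Icc x y) :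
    HasDerivWithinAt (fun s => ∫ τ in x..s, g τ) (g t) (Icc x y) t :=
  haveI : Fact (t ∈ Icc x y) := ⟨ht⟩
  integral_hasDerivWithinAt_right
    ((hg.mono (Icc_subset_Icc_right ht.2)).intervalIntegrable_of_Icc ht.1)
    (hg.stronglyMeasurableAtFilter_nhdsWithin measurableSet_Icc t) (hg t ht)

theorem continuousOn_div_id {f : ℝ → ℝ} (hx : 0 < x) (hf : ContinuousOn f (Icc x y)) :
    ContinuousOn (fun t => f t / t) (Icc x y) :=
  hf.div continuousOn_id fun _ ht => (hx.trans_le ht.1).ne'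

theorem exists_shift_inv_mul_one_sub {s : Set ℝ} {δ : ℝ} {Ω C : ℝ → ℝ} (hδ : 0 < δ)
    (hΩ : (∀ t ∈ s, δ ≤ Ω t) ∨ ∀ t ∈ s, Ω t ≤ -δ) (hC : ∀ t ∈ s, |C t| ≤ 1) :
    ∃ κ, ∀ t ∈ s, (Ω t)⁻¹ * (1 - C t) + κ ∈ Icc 0 (2 / δ) := by
  have hC' : ∀ t ∈ s, 1 - C t ∈ Icc (0 : ℝ) 2 := fun t ht => by
    constructor <;> linarith [abs_le.1 (hC t ht)]
  have key : ∀ {ω c : ℝ}, δ ≤ ω → c ∈ Icc (0 : ℝ) 2 → ω⁻¹ * c ∈ Icc 0 (2 / δ) :=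
    fun {ω c} hω hc => by
      have hω0 : 0 < ω := hδ.trans_le hω
      rw [inv_mul_eq_div]
      exact ⟨div_nonneg hc.1 hω0.le, div_le_div₀ zero_le_two hc.2 hδ hω⟩
  rcases hΩ with hΩ | hΩ
  · exact ⟨0, fun t ht => by simpa only [add_zero] using key (hΩ t ht) (hC' t ht)⟩
  · refine ⟨2 / δ, fun t ht => ?_⟩
    have h := key (le_neg_of_le_neg (hΩ t ht)) (hC' t ht)
    rw [inv_neg, neg_mul] at h
    constructor <;> linarith [h.1, h.2]

theorem inv_mul_div_le {δ B ω e t : ℝ} (hδ : 0 < δ) (ht : 0 < t) (hω : δ ≤ |ω|)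
    (he : |e| ≤ B / t) : ω⁻¹ * e / t ≤ B / δ / t ^ 2 := by
  calc ω⁻¹ * e / t ≤ |ω|⁻¹ * |e| / t := by
        rw [← abs_inv, ← abs_mul]; gcongr; exact le_abs_self _
    _ ≤ δ⁻¹ * (B / t) / t := by gcongr
    _ = B / δ / t ^ 2 := by ring

/- First-derivative test, with the primitive `F = (Ω⁻¹ (1 - C) + κ + B / δ) / t`, `F' ≤ S / t`.
Using `1 - C` rather than `-C` makes the term with `(Ω⁻¹)' ≤ 0` harmless. -/
theorem neg_integral_div_le_of_oscillation {δ B : ℝ} {Ω Ω' S C η : ℝ → ℝ}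
    (hx : 0 < x) (hxy : x ≤ y) (hδ : 0 < δ)
    (hΩ : ∀ t ∈ Icc x y, HasDerivWithinAt Ω (Ω' t) (Icc x y) t)
    (hΩ' : ∀ t ∈ Icc x y, 0 ≤ Ω' t)
    (hΩδ : (∀ t ∈ Icc x y, δ ≤ Ω t) ∨ ∀ t ∈ Icc x y, Ω t ≤ -δ)
    (hC : ∀ t ∈ Icc x y, HasDerivWithinAt C (-(Ω t * S t + η t)) (Icc x y) t)
    (hC1 : ∀ t ∈ Icc x y, |C t| ≤ 1) (hη : ∀ t ∈ Icc x y, |η t| ≤ B / t)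
    (hS : ContinuousOn S (Icc x y)) :
    -∫ t in x..y, S t / t ≤ (2 + B) / (δ * x) := by
  have hpos : ∀ t ∈ Icc x y, 0 < t := fun t ht => hx.trans_le ht.1
  have hΩabs : ∀ t ∈ Icc x y, δ ≤ |Ω t| := fun t ht =>
    le_abs.2 (hΩδ.imp (fun h => h t ht) fun h => le_neg_of_le_neg (h t ht))
  have hΩ0 : ∀ t ∈ Icc x y, Ω t ≠ 0 := fun t ht => abs_pos.1 (hδ.trans_le (hΩabs t ht))
  have hxI : x ∈ Icc x y := left_mem_Icc.2 hxy
  have hyI : y ∈ Icc x y := right_mem_Icc.2 hxy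
  have hB : 0 ≤ B := by
    simpa [hx.ne'] using mul_nonneg ((abs_nonneg _).trans (hη x hxI)) hx.le
  obtain ⟨κ, hκ⟩ := exists_shift_inv_mul_one_sub hδ hΩδ hC1
  set N : ℝ → ℝ := fun t => (Ω t)⁻¹ * (1 - C t) + κ with hN
  have hderiv : ∀ t ∈ Icc x y, HasDerivWithinAt (fun t => (N t + B / δ) / t)
      (S t / t - (Ω' t * (1 - C t) / Ω t ^ 2) / t + (Ω t)⁻¹ * η t / t
        - (N t + B / δ) / t ^ 2) (Icc x y) t := fun t ht => by
    have hNt := (((hΩ t ht).inv (hΩ0 t ht)).mul ((hC t ht).const_sub 1)).add_const κ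
    refine ((hNt.add_const (B / δ)).div (hasDerivWithinAt_id t _) (hpos t ht).ne').congr_deriv ?_
    have := hΩ0 t ht
    have := (hpos t ht).ne'
    simp only [hN, id, Pi.mul_apply, Pi.inv_apply]
    field_simp
    ring
  have hle : ∀ t ∈ Icc x y, S t / t - (Ω' t * (1 - C t) / Ω t ^ 2) / t + (Ω t)⁻¹ * η t / t
      - (N t + B / δ) / t ^ 2 ≤ S t / t := fun t ht => by
    have ht0 := hpos t ht
    have hdrift : 0 ≤ (Ω' t * (1 - C t) / Ω t ^ 2) / t := by
      have := hΩ' t ht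
      have : 0 ≤ 1 - C t := by linarith [abs_le.1 (hC1 t ht)]
      positivity
    have herror := inv_mul_div_le hδ ht0 (hΩabs t ht) (hη t ht)
    have hshift : 0 ≤ N t / t ^ 2 := div_nonneg (hκ t ht).1 (sq_nonneg t)
    rw [add_div]
    linarith
  have hF := sub_le_integral_of_hasDerivWithinAt_Icc_le hxy hderiv (continuousOn_div_id hx hS) hle
  have hFy : 0 ≤ (N y + B / δ) / y :=
    div_nonneg (add_nonneg (hκ y hyI).1 (div_nonneg hB hδ.le)) (hpos y hyI).le
  have hFx : (N x + B / δ) / x ≤ (2 + B) / (δ * x) := by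
    rw [← div_div, add_div 2 B]
    gcongr
    exact (hκ x hxI).2
  linarith

theorem integral_le_of_resonance_window {f : ℝ → ℝ} {τ c A : ℝ} (hx : 0 < x) (hxy : x ≤ y)
    (hc : 1 ≤ c) (hA : 0 ≤ A) (hf : ContinuousOn f (Icc x y))
    (hmid : ∀ t ∈ Icc x y, f t ≤ 1 / t)
    (hlow : ∀ s ∈ Icc x y, s ≤ τ → ∫ t in x..s, f t ≤ A)
    (hhigh : ∀ s ∈ Icc x y, c * τ ≤ s → ∫ t in s..y, f t ≤ A) :
    ∫ t in x..y, f t ≤ 2 * A + log c := by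
  have hint : ∀ {s s'}, x ≤ s → s ≤ s' → s' ≤ y → IntervalIntegrable f volume s s' :=
    fun h h' h'' => (hf.mono (Icc_subset_Icc h h'')).intervalIntegrable_of_Icc h'
  have hlogc : 0 ≤ log c := log_nonneg hc
  have window : ∀ {s s'}, x ≤ s → s ≤ s' → s' ≤ y → s' ≤ c * s → ∫ t in s..s', f t ≤ log c :=
    fun {s s'} h h' h'' hcs => by
      have hs : 0 < s := hx.trans_le h
      have hs' : 0 < s' := hs.trans_le h'
      have hinv : IntervalIntegrable (fun t : ℝ => 1 / t) volume s s' :=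
        (continuousOn_div_id hs continuousOn_const).intervalIntegrable_of_Icc h'
      calc ∫ t in s..s', f t ≤ ∫ t in s..s', 1 / t :=
            integral_mono_on h' (hint h h' h'') hinv fun t ht =>
              hmid t ⟨h.trans ht.1, ht.2.trans h''⟩
        _ = log (s' / s) := integral_one_div_of_pos hs hs'
        _ ≤ log c := log_le_log (by positivity) ((div_le_iff₀ hs).2 hcs)
  have after : ∀ s ∈ Icc x y, τ ≤ s → ∫ t in s..y, f t ≤ log c + A := fun s hs hτs => by
    rcases le_total (c * τ) s with h | h
    · linarith [hhigh s hs h]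
    rcases le_total y (c * τ) with hy | hy
    · linarith [window hs.1 hs.2 le_rfl (hy.trans (by gcongr))]
    rw [← integral_add_adjacent_intervals (hint hs.1 h hy) (hint (hs.1.trans h) hy le_rfl)]
    exact add_le_add (window hs.1 h hy (by gcongr)) (hhigh _ ⟨hs.1.trans h, hy⟩ le_rfl)
  rcases le_total τ x with h | h
  · linarith [after x (left_mem_Icc.2 hxy) h]
  rcases le_total y τ with hy | hy
  · linarith [hlow y (right_mem_Icc.2 hxy) hy]
  rw [← integral_add_adjacent_intervals (hint le_rfl h hy) (hint h hy le_rfl)]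
  linarith [hlow τ ⟨h, hy⟩ le_rfl, after τ ⟨h, hy⟩ le_rfl]

end OscillatoryIntegrals

section Phase

/-- The energy `v² + λ² u²` of an oscillator with position `u` and velocity `v`. -/
def energy (lam : ℝ) (u v : ℝ → ℝ) (t : ℝ) : ℝ :=
  v t ^ 2 + lam ^ 2 * u t ^ 2

/-- Classical solutions of `u'' + b u' + λ² u = 0` on a set `s`, written as a first-order system
for the position `u` and the velocity `v`; derivatives are taken within `s`, so one-sided at the
endpoints of an interval. -/
def IsClassicalSolOn (s : Set ℝ) (b : ℝ → ℝ) (lam : ℝ) (u v : ℝ → ℝ) : Prop :=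
  ∀ t ∈ s, HasDerivWithinAt u (v t) s t ∧
    HasDerivWithinAt v (-(b t * v t) - lam ^ 2 * u t) s t

/-- In polar coordinates `v = √E cos θ`, `λ u = √E sin θ`, with `E` the energy, this is
`sin (φ + 2 θ)`; it is written without `θ` to avoid choosing a continuous angle, and is `0` where
`E = 0`. -/
noncomputable def phaseSin (lam : ℝ) (φ u v : ℝ → ℝ) (t : ℝ) : ℝ :=
  (sin (φ t) * (v t ^ 2 - lam ^ 2 * u t ^ 2) + cos (φ t) * (2 * lam * u t * v t)) /
    energy lam u v t

/-- The cosine `cos (φ + 2 θ)` belonging to `phaseSin`. -/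
noncomputable def phaseCos (lam : ℝ) (φ u v : ℝ → ℝ) (t : ℝ) : ℝ :=
  (cos (φ t) * (v t ^ 2 - lam ^ 2 * u t ^ 2) - sin (φ t) * (2 * lam * u t * v t)) /
    energy lam u v t

theorem energy_neg (lam : ℝ) (u v : ℝ → ℝ) : energy (-lam) u v = energy lam u v := by
  funext t
  simp only [energy, neg_sq]

theorem energy_nonneg (lam : ℝ) (u v : ℝ → ℝ) (t : ℝ) : 0 ≤ energy lam u v t := by
  unfold energy
  positivity

variable {lam t : ℝ} {b φ u v : ℝ → ℝ} {s : Set ℝ}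

theorem phaseSin_sq_add_phaseCos_sq (φ : ℝ → ℝ) (h : energy lam u v t ≠ 0) :
    phaseSin lam φ u v t ^ 2 + phaseCos lam φ u v t ^ 2 = 1 := by
  rw [phaseSin, phaseCos, div_pow, div_pow, ← add_div, div_eq_one_iff_eq (pow_ne_zero 2 h), energy]
  linear_combination
    (v t ^ 2 + lam ^ 2 * u t ^ 2) ^ 2 * sin_sq_add_cos_sq (φ t)

theorem abs_phaseSin_le_one (φ : ℝ → ℝ) (h : energy lam u v t ≠ 0) :
    |phaseSin lam φ u v t| ≤ 1 :=
  (sq_le_one_iff_abs_le_one _).1 <| by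
    nlinarith [phaseSin_sq_add_phaseCos_sq φ h, sq_nonneg (phaseCos lam φ u v t)]

theorem abs_phaseCos_le_one (φ : ℝ → ℝ) (h : energy lam u v t ≠ 0) :
    |phaseCos lam φ u v t| ≤ 1 :=
  (sq_le_one_iff_abs_le_one _).1 <| by
    nlinarith [phaseSin_sq_add_phaseCos_sq φ h, sq_nonneg (phaseSin lam φ u v t)]

/- With `θ` as in `phaseSin`: `sin (φ + 2 θ) + sin (φ - 2 θ) = 2 sin φ cos (2 θ)`. -/
theorem phaseSin_add_phaseSin_neg (lam : ℝ) (φ u v : ℝ → ℝ) (t : ℝ) :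
    phaseSin lam φ u v t + phaseSin (-lam) φ u v t =
      2 * sin (φ t) * phaseSin lam (fun _ => π / 2) u v t := by
  simp only [phaseSin, energy_neg, sin_pi_div_two, cos_pi_div_two]
  ring

namespace IsClassicalSolOn

theorem mono {s' : Set ℝ} (h : IsClassicalSolOn s b lam u v) (hs : s' ⊆ s) :
    IsClassicalSolOn s' b lam u v := fun t ht =>
  ⟨(h t (hs ht)).1.mono hs, (h t (hs ht)).2.mono hs⟩

theorem neg_frequency (h : IsClassicalSolOn s b lam u v) : IsClassicalSolOn s b (-lam) u v := by
  simpa only [IsClassicalSolOn, neg_sq] using h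

theorem continuousOn_position (h : IsClassicalSolOn s b lam u v) : ContinuousOn u s :=
  fun t ht => (h t ht).1.continuousWithinAt

theorem continuousOn_velocity (h : IsClassicalSolOn s b lam u v) : ContinuousOn v s :=
  fun t ht => (h t ht).2.continuousWithinAt

theorem hasDerivWithinAt_energy (h : IsClassicalSolOn s b lam u v) (ht : t ∈ s) :
    HasDerivWithinAt (energy lam u v) (-(2 * b t * v t ^ 2)) s t := by
  refine (((h t ht).2.pow 2).add (((h t ht).1.pow 2).const_mul (lam ^ 2))).congr_deriv ?_
  push_cast
  ring

theorem antitoneOn_energy (h : IsClassicalSolOn s b lam u v) (hs : Convex ℝ s)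
    (hb : ∀ t ∈ s, 0 ≤ b t) : AntitoneOn (energy lam u v) s :=
  antitoneOn_of_hasDerivWithinAt_nonpos hs
    (fun t ht => (h.hasDerivWithinAt_energy ht).continuousWithinAt)
    (fun t ht => (h.hasDerivWithinAt_energy (interior_subset ht)).mono interior_subset)
    fun t ht => neg_nonpos.2 <| by
      have := hb t (interior_subset ht)
      positivity

theorem hasDerivWithinAt_log_energy (h : IsClassicalSolOn s b lam u v) (ht : t ∈ s)
    (hE : energy lam u v t ≠ 0) :
    HasDerivWithinAt (fun t => log (energy lam u v t))
      (-(b t * (1 + phaseSin lam (fun _ => π / 2) u v t))) s t := by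
  refine ((h.hasDerivWithinAt_energy ht).log hE).congr_deriv ?_
  rw [phaseSin, sin_pi_div_two, cos_pi_div_two]
  field_simp
  rw [energy]
  ring

theorem hasDerivWithinAt_phaseCos {ω : ℝ} (h : IsClassicalSolOn s b lam u v) (ht : t ∈ s)
    (hE : energy lam u v t ≠ 0) (hφ : HasDerivWithinAt φ ω s t) :
    HasDerivWithinAt (phaseCos lam φ u v)
      (-((ω + 2 * lam) * phaseSin lam φ u v t +
        b t * phaseSin lam (fun _ => 0) u v t * phaseSin lam φ u v t)) s t := by
  obtain ⟨hu, hv⟩ := h t ht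
  have hP := (hv.pow 2).sub ((hu.pow 2).const_mul (lam ^ 2))
  have hQ := (hu.const_mul (2 * lam)).mul hv
  refine (((hφ.cos.mul hP).sub (hφ.sin.mul hQ)).div (h.hasDerivWithinAt_energy ht) hE).congr_deriv
    ?_
  simp only [phaseSin, sin_zero, cos_zero, Pi.mul_apply, Pi.sub_apply, Pi.pow_apply]
  field_simp
  simp only [energy]
  push_cast
  ring

theorem continuousOn_phaseSin (h : IsClassicalSolOn s b lam u v) (hφ : ContinuousOn φ s)
    (hE : ∀ t ∈ s, energy lam u v t ≠ 0) : ContinuousOn (phaseSin lam φ u v) s := by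
  have hu := h.continuousOn_position
  have hv := h.continuousOn_velocity
  refine ContinuousOn.div ?_ (fun t ht => (h.hasDerivWithinAt_energy ht).continuousWithinAt) hE
  have hsin := continuous_sin.comp_continuousOn hφ
  have hcos := continuous_cos.comp_continuousOn hφ
  exact (hsin.mul ((hv.pow 2).sub (continuousOn_const.mul (hu.pow 2)))).add
    (hcos.mul ((continuousOn_const.mul hu).mul hv))

theorem neg_integral_phaseSin_div_le {x y K δ : ℝ} {ω ω' : ℝ → ℝ}
    (h : IsClassicalSolOn (Icc x y) b lam u v) (hx : 0 < x) (hxy : x ≤ y) (hδ : 0 < δ)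
    (hE : ∀ t ∈ Icc x y, energy lam u v t ≠ 0) (hb : ∀ t ∈ Icc x y, |b t| ≤ K / t)
    (hφ : ∀ t ∈ Icc x y, HasDerivWithinAt φ (ω t) (Icc x y) t)
    (hω : ∀ t ∈ Icc x y, HasDerivWithinAt ω (ω' t) (Icc x y) t)
    (hω' : ∀ t ∈ Icc x y, 0 ≤ ω' t)
    (hδω : (∀ t ∈ Icc x y, δ ≤ ω t + 2 * lam) ∨ ∀ t ∈ Icc x y, ω t + 2 * lam ≤ -δ) :
    -∫ t in x..y, phaseSin lam φ u v t / t ≤ (2 + K) / (δ * x) := by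
  refine neg_integral_div_le_of_oscillation hx hxy hδ (fun t ht => (hω t ht).add_const _) hω' hδω
    (fun t ht => h.hasDerivWithinAt_phaseCos ht (hE t ht) (hφ t ht))
    (fun t ht => abs_phaseCos_le_one φ (hE t ht)) (fun t ht => ?_)
    (h.continuousOn_phaseSin (fun t ht => (hφ t ht).continuousWithinAt) hE)
  have h1 := abs_phaseSin_le_one (fun _ => 0) (hE t ht)
  have h2 := abs_phaseSin_le_one φ (hE t ht)
  rw [abs_mul, abs_mul]
  exact (mul_le_of_le_one_right (by positivity) h2).trans
    ((mul_le_of_le_one_right (abs_nonneg _) h1).trans (hb t ht))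

end IsClassicalSolOn

theorem IsDampedSol.isClassicalSolOn {t0 : ℝ} (h : IsDampedSol t0 b lam u v)
    (hb : ContinuousOn b (Ici t0)) (T : ℝ) : IsClassicalSolOn (Icc t0 T) b lam u v := by
  obtain ⟨hu, hv, w, -, hvw, hode⟩ := h
  set g : ℝ → ℝ := fun t => -(b t * v t) - lam ^ 2 * u t
  have hg : ContinuousOn g (Ici t0) :=
    (hb.mul hv).neg.sub
      (continuousOn_const.mul fun t ht => (hu t ht).continuousAt.continuousWithinAt)
  have hvg : ∀ t ∈ Icc t0 T, v t = v t0 + ∫ s in t0..t, g s := fun t ht => by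
    rw [hvw t ht.1]
    congr 1
    refine integral_congr_ae ?_
    filter_upwards [(ae_restrict_iff' measurableSet_Ici).1 hode] with s hs hst
    rw [uIoc_of_le ht.1] at hst
    linarith [hs hst.1.le]
  exact fun t ht => ⟨(hu t ht.1).hasDerivWithinAt,
    ((hasDerivWithinAt_integral_Icc (hg.mono Icc_subset_Ici_self) ht).const_add _).congr
      hvg (hvg t ht)⟩

end Phase

section HighFrequency

variable {a r α lam x y K : ℝ} {b u v : ℝ → ℝ}

/-- The oscillating damping coefficient `(a + r sin (t ^ α)) / t` (only `t > 0` is relevant). -/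
noncomputable def oscDamping (a r α t : ℝ) : ℝ :=
  (a + r * sin (t ^ α)) / t

theorem oscDamping_nonneg {t : ℝ} (hr : 0 ≤ r) (hra : r ≤ a) (ht : 0 < t) :
    0 ≤ oscDamping a r α t :=
  div_nonneg (by nlinarith [neg_one_le_sin (t ^ α)]) ht.le

theorem abs_oscDamping_le {t : ℝ} (hr : 0 ≤ r) (hra : r ≤ a) (ht : 0 < t) :
    |oscDamping a r α t| ≤ (a + r) / t := by
  rw [abs_of_nonneg (oscDamping_nonneg hr hra ht), oscDamping]
  gcongr
  exact mul_le_of_le_one_right hr (sin_le_one _)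

theorem continuousOn_oscDamping (a r α : ℝ) : ContinuousOn (oscDamping a r α) (Ioi 0) := by
  have hrpow : ContinuousOn (fun t : ℝ => t ^ α) (Ioi 0) :=
    continuousOn_id.rpow_const fun t ht => Or.inl ht.ne'
  exact (continuousOn_const.add (continuousOn_const.mul
    (continuous_sin.comp_continuousOn hrpow))).div continuousOn_id fun t ht => ht.ne'

theorem hasDerivWithinAt_rpow_Icc (α : ℝ) (hx : 0 < x) :
    ∀ t ∈ Icc x y, HasDerivWithinAt (fun t => t ^ α) (α * t ^ (α - 1)) (Icc x y) t :=
  fun _ ht => (hasDerivAt_rpow_const (Or.inl (hx.trans_le ht.1).ne')).hasDerivWithinAt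

theorem hasDerivWithinAt_mul_rpow_Icc (α : ℝ) (hx : 0 < x) :
    ∀ t ∈ Icc x y, HasDerivWithinAt (fun t => α * t ^ (α - 1))
      (α * ((α - 1) * t ^ (α - 1 - 1))) (Icc x y) t :=
  fun t ht => (hasDerivWithinAt_rpow_Icc (α - 1) hx t ht).const_mul α

theorem mul_sub_one_mul_rpow_nonneg (hα : 1 ≤ α) (hx : 0 < x) :
    ∀ t ∈ Icc x y, 0 ≤ α * ((α - 1) * t ^ (α - 1 - 1)) := fun t ht => by
  have := hx.trans_le ht.1
  have := sub_nonneg.2 hα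
  positivity

theorem neg_integral_sin_rpow_div_le (hα : 1 ≤ α) (hx : 0 < x) (hxy : x ≤ y) :
    -∫ t in x..y, sin (t ^ α) / t ≤ 2 / (α * x ^ α) := by
  have hφ := hasDerivWithinAt_rpow_Icc (y := y) α hx
  have hbound := neg_integral_div_le_of_oscillation (C := fun t => cos (t ^ α)) (η := fun _ => 0)
    (B := 0) (δ := α * x ^ (α - 1)) hx hxy (by positivity)
    (hasDerivWithinAt_mul_rpow_Icc α hx) (mul_sub_one_mul_rpow_nonneg hα hx)
    (Or.inl fun t ht => by
      have := sub_nonneg.2 hα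
      gcongr
      exact ht.1)
    (fun t ht => (hφ t ht).cos.congr_deriv (by ring)) (fun t _ => abs_cos_le_one _)
    (fun t _ => by simp only [abs_zero, zero_div, le_refl])
    (fun t ht => (hφ t ht).sin.continuousWithinAt)
  rwa [add_zero, mul_assoc, ← rpow_add_one hx.ne', sub_add_cancel] at hbound

namespace IsClassicalSolOn

theorem neg_integral_phaseSin_rpow_div_le {δ : ℝ} (h : IsClassicalSolOn (Icc x y) b lam u v)
    (hα : 1 ≤ α) (hx : 0 < x) (hxy : x ≤ y) (hδ : 0 < δ)
    (hE : ∀ t ∈ Icc x y, energy lam u v t ≠ 0) (hb : ∀ t ∈ Icc x y, |b t| ≤ K / t)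
    (hδω : (∀ t ∈ Icc x y, δ ≤ α * t ^ (α - 1) + 2 * lam) ∨
      ∀ t ∈ Icc x y, α * t ^ (α - 1) + 2 * lam ≤ -δ) :
    -∫ t in x..y, phaseSin lam (fun t => t ^ α) u v t / t ≤ (2 + K) / (δ * x) :=
  h.neg_integral_phaseSin_div_le hx hxy hδ hE hb (hasDerivWithinAt_rpow_Icc α hx)
    (hasDerivWithinAt_mul_rpow_Icc α hx) (mul_sub_one_mul_rpow_nonneg hα hx) hδω

/- The phase `t ^ α - 2 θ` is stationary only near `α t ^ (α - 1) = 2 lam`. The resonance window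
`lam ≤ α t ^ (α - 1) ≤ 3 lam` has logarithmic length `log 3 / (α - 1)`. -/
theorem neg_integral_phaseSin_neg_rpow_div_le (h : IsClassicalSolOn (Icc x y) b lam u v)
    (hα : 1 < α) (hlam : 0 < lam) (hx : 0 < x) (hxy : x ≤ y) (hK : 0 ≤ K)
    (hE : ∀ t ∈ Icc x y, energy lam u v t ≠ 0) (hb : ∀ t ∈ Icc x y, |b t| ≤ K / t) :
    -∫ t in x..y, phaseSin (-lam) (fun t => t ^ α) u v t / t ≤
      2 * ((2 + K) / (lam * x)) + log 3 / (α - 1) := by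
  have hα' : 0 < α - 1 := sub_pos.2 hα
  have hα0 : 0 < α := zero_lt_one.trans hα
  have hE' : ∀ t ∈ Icc x y, energy (-lam) u v t ≠ 0 := by rwa [energy_neg]
  have hS := h.neg_frequency.continuousOn_phaseSin
    (fun t ht => (hasDerivWithinAt_rpow_Icc α hx t ht).continuousWithinAt) hE'
  have off_resonance : ∀ s s', x ≤ s → s ≤ s' → s' ≤ y →
      ((∀ t ∈ Icc s s', lam ≤ α * t ^ (α - 1) + 2 * -lam) ∨
        ∀ t ∈ Icc s s', α * t ^ (α - 1) + 2 * -lam ≤ -lam) →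
      ∫ t in s..s', -(phaseSin (-lam) (fun t => t ^ α) u v t / t) ≤ (2 + K) / (lam * x) :=
    fun s s' hs hss' hs' hω => by
      have hsub := Icc_subset_Icc hs hs'
      rw [intervalIntegral.integral_neg]
      exact ((h.neg_frequency.mono hsub).neg_integral_phaseSin_rpow_div_le hα.le
        (hx.trans_le hs) hss' hlam (fun t ht => hE' t (hsub ht)) (fun t ht => hb t (hsub ht))
        hω).trans (by gcongr)
  have hlog : log 3 / (α - 1) = log (3 ^ (α - 1)⁻¹) := by
    rw [log_rpow three_pos, inv_mul_eq_div]
  rw [← intervalIntegral.integral_neg, hlog]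
  refine integral_le_of_resonance_window (τ := (lam / α) ^ (α - 1)⁻¹) hx hxy
    (one_le_rpow (by norm_num) (by positivity)) (by positivity) (continuousOn_div_id hx hS).neg
    (fun t ht => ?_) (fun s hs hsτ => ?_) fun s hs hsτ => ?_
  · have ht0 := hx.trans_le ht.1
    rw [← neg_div]
    gcongr
    exact (neg_le_abs _).trans (abs_phaseSin_le_one _ (hE' t ht))
  · refine off_resonance x s le_rfl hs.1 hs.2 (Or.inr fun t ht => ?_)
    have := (le_rpow_inv_iff_of_pos (hx.trans_le ht.1).le (by positivity) hα').1 (ht.2.trans hsτ)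
    linarith [(le_div_iff₀' hα0).1 this]
  · refine off_resonance s y hs.1 hs.2 le_rfl (Or.inl fun t ht => ?_)
    rw [← mul_rpow zero_le_three (by positivity)] at hsτ
    have := (rpow_inv_le_iff_of_pos (by positivity) (hx.trans_le (hs.1.trans ht.1)).le hα').1
      (hsτ.trans ht.1)
    rw [← mul_div_assoc, div_le_iff₀' hα0] at this
    linarith

theorem log_energy_sub_log_energy (h : IsClassicalSolOn (Icc x y) (oscDamping a r α) lam u v)
    (hx : 0 < x) (hxy : x ≤ y) (hE : ∀ t ∈ Icc x y, energy lam u v t ≠ 0) :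
    log (energy lam u v y) - log (energy lam u v x) =
      -(a * log (y / x) + a * (∫ t in x..y, phaseSin lam (fun _ => π / 2) u v t / t)
        + r * (∫ t in x..y, sin (t ^ α) / t)
        + r / 2 * (∫ t in x..y, phaseSin lam (fun t => t ^ α) u v t / t)
        + r / 2 * (∫ t in x..y, phaseSin (-lam) (fun t => t ^ α) u v t / t)) := by
  have hφ : ContinuousOn (fun t : ℝ => t ^ α) (Icc x y) := fun t ht =>
    (hasDerivWithinAt_rpow_Icc α hx t ht).continuousWithinAt
  have hE' : ∀ t ∈ Icc x y, energy (-lam) u v t ≠ 0 := by rwa [energy_neg]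
  have hl := h.continuousOn_phaseSin (φ := fun _ => π / 2) continuousOn_const hE
  have hint : ∀ (k : ℝ) {f : ℝ → ℝ}, ContinuousOn f (Icc x y) →
      IntervalIntegrable (fun t => k * (f t / t)) volume x y :=
    fun k _ hf => ((continuousOn_div_id hx hf).intervalIntegrable_of_Icc hxy).const_mul k
  have hone := hint a (f := fun _ => 1) continuousOn_const
  have hrot := hint a hl
  have hsin := hint r (f := fun t => sin (t ^ α)) (continuous_sin.comp_continuousOn hφ)
  have hplus := hint (r / 2) (h.continuousOn_phaseSin hφ hE)
  have hminus := hint (r / 2) (h.neg_frequency.continuousOn_phaseSin hφ hE')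
  have hosc : ContinuousOn (oscDamping a r α) (Icc x y) :=
    (continuousOn_oscDamping a r α).mono fun t ht => hx.trans_le ht.1
  rw [← integral_eq_sub_of_hasDerivWithinAt_Icc hxy
      (fun t ht => h.hasDerivWithinAt_log_energy ht (hE t ht))
      (hosc.mul (continuousOn_const.add hl)).neg,
    intervalIntegral.integral_neg, ← integral_one_div_of_pos hx (hx.trans_le hxy)]
  simp only [← intervalIntegral.integral_const_mul]
  rw [← intervalIntegral.integral_add hone hrot,
    ← intervalIntegral.integral_add (hone.add hrot) hsin,
    ← intervalIntegral.integral_add ((hone.add hrot).add hsin) hplus,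
    ← intervalIntegral.integral_add (((hone.add hrot).add hsin).add hplus) hminus]
  congr 1
  refine intervalIntegral.integral_congr fun t _ => ?_
  have hsum := phaseSin_add_phaseSin_neg lam (fun t => t ^ α) u v t
  simp only [oscDamping]
  linear_combination -(r / 2 / t) * hsum

theorem log_energy_sub_le (h : IsClassicalSolOn (Icc x y) (oscDamping a r α) lam u v)
    (hr : 0 ≤ r) (hra : r ≤ a) (hα : 1 < α) (hlam : 0 < lam) (hx : 0 < x) (hxy : x ≤ y)
    (hE : ∀ t ∈ Icc x y, energy lam u v t ≠ 0) :
    log (energy lam u v y) - log (energy lam u v x) ≤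
      (a + 5 * r / 2) * ((2 + (a + r)) / (2 * lam * x)) + 2 * r / (α * x ^ α)
        + r / 2 * (log 3 / (α - 1)) - a * log (y / x) := by
  have ha : 0 ≤ a := hr.trans hra
  have hb : ∀ t ∈ Icc x y, |oscDamping a r α t| ≤ (a + r) / t := fun t ht =>
    abs_oscDamping_le hr hra (hx.trans_le ht.1)
  have hrotation := h.neg_integral_phaseSin_div_le (δ := 2 * lam) (φ := fun _ => π / 2)
    (ω := fun _ => 0) (ω' := fun _ => 0) hx hxy (by positivity) hE hb
    (fun t _ => hasDerivWithinAt_const ..) (fun t _ => hasDerivWithinAt_const ..)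
    (fun _ _ => le_rfl) (Or.inl fun _ _ => (zero_add _).ge)
  have hplus := h.neg_integral_phaseSin_rpow_div_le (δ := 2 * lam) hα.le hx hxy
    (by positivity) hE hb (Or.inl fun t ht => by
      have := hx.trans_le ht.1
      exact le_add_of_nonneg_left (by positivity))
  have hminus := h.neg_integral_phaseSin_neg_rpow_div_le hα hlam hx hxy (add_nonneg ha hr) hE hb
  have hsin := neg_integral_sin_rpow_div_le hα.le hx hxy
  rw [h.log_energy_sub_log_energy hx hxy hE]
  have hscale : (2 + (a + r)) / (lam * x) = 2 * ((2 + (a + r)) / (2 * lam * x)) := by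
    field_simp
  rw [hscale] at hminus
  rw [show 2 * r / (α * x ^ α) = r * (2 / (α * x ^ α)) by ring]
  nlinarith [mul_le_mul_of_nonneg_left hrotation ha, mul_le_mul_of_nonneg_left hsin hr,
    mul_le_mul_of_nonneg_left hplus hr, mul_le_mul_of_nonneg_left hminus hr]

theorem energy_le_of_half_le (h : IsClassicalSolOn (Icc x y) (oscDamping a r α) lam u v)
    (hr : 0 ≤ r) (hra : r ≤ a) (hα : 1 < α) (hx : 0 < x) (hxy : x ≤ y) (hlamx : 1 / 2 ≤ lam * x) :
    energy lam u v y ≤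
      exp ((a + 5 * r / 2) * (2 + (a + r)) + 2 * r / (α * x ^ α) + r / 2 * (log 3 / (α - 1))) *
        energy lam u v x * (x / y) ^ a := by
  have hy : 0 < y := hx.trans_le hxy
  have hlam : 0 < lam := pos_of_mul_pos_left (one_half_pos.trans_le hlamx) hx.le
  rcases (energy_nonneg lam u v y).eq_or_lt with hEy | hEy
  · rw [← hEy]
    have := energy_nonneg lam u v x
    positivity
  have hE : ∀ t ∈ Icc x y, 0 < energy lam u v t := fun t ht =>
    hEy.trans_le <| h.antitoneOn_energy (convex_Icc x y)
      (fun s hs => oscDamping_nonneg hr hra (hx.trans_le hs.1)) ht (right_mem_Icc.2 hxy) ht.2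
  have hlog := h.log_energy_sub_le hr hra hα hlam hx hxy fun t ht => (hE t ht).ne'
  have hscale : (a + 5 * r / 2) * ((2 + (a + r)) / (2 * lam * x)) ≤
      (a + 5 * r / 2) * (2 + (a + r)) := by
    have ha : 0 ≤ a := hr.trans hra
    gcongr
    exact div_le_self (by positivity) (by linarith)
  rw [← log_le_log_iff hEy (by have := hE x (left_mem_Icc.2 hxy); positivity),
    log_mul (by have := hE x (left_mem_Icc.2 hxy); positivity) (by positivity),
    log_mul (exp_ne_zero _) (hE x (left_mem_Icc.2 hxy)).ne', log_exp, log_rpow (by positivity),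
    ← inv_div y x, log_inv]
  linarith

end IsClassicalSolOn

end HighFrequency

section LowFrequency

variable {x y μ D lam : ℝ} {b u v : ℝ → ℝ}

theorem div_rpow_le_interpolation {s : ℝ} (hx : 0 < x) (hs : 0 < s) (hy : 0 < y) (hμ : 0 ≤ μ)
    (hμ2 : μ ≤ 2) :
    (x / s) ^ μ ≤ (x / y) ^ (μ / 2) * ((1 - μ / 2) + μ / 2 * (x * y / s ^ 2)) := by
  have hsq : (x / s) ^ μ = (x / y) ^ (μ / 2) * (x * y / s ^ 2) ^ (μ / 2) := by
    rw [← mul_rpow (by positivity) (by positivity),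
      show x / y * (x * y / s ^ 2) = (x / s) ^ (2 : ℝ) by rw [rpow_two]; field_simp,
      ← rpow_mul (by positivity), mul_div_cancel₀ μ two_ne_zero]
  rw [hsq]
  gcongr
  simpa only [one_rpow, one_mul, mul_one] using geom_mean_le_arith_mean2_weighted
    (w₁ := 1 - μ / 2) (p₁ := 1) (by linarith) (by positivity) zero_le_one
    (show 0 ≤ x * y / s ^ 2 by positivity) (sub_add_cancel 1 (μ / 2))

theorem continuousOn_div_rpow (μ : ℝ) (hx : 0 < x) :
    ContinuousOn (fun s => (x / s) ^ μ) (Icc x y) :=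
  (continuousOn_const.div continuousOn_id fun _ hs => (hx.trans_le hs.1).ne').rpow_const
    fun _ hs => Or.inl (div_pos hx (hx.trans_le hs.1)).ne'

theorem integral_div_rpow_le (hx : 0 < x) (hxy : x ≤ y) (hμ : 0 ≤ μ) (hμ2 : μ ≤ 2) :
    ∫ s in x..y, (x / s) ^ μ ≤ (x / y) ^ (μ / 2) * (y - x) := by
  have hy : 0 < y := hx.trans_le hxy
  have hpos : ∀ s ∈ Icc x y, 0 < s := fun s hs => hx.trans_le hs.1
  have hprim : ∀ s ∈ Icc x y, HasDerivWithinAt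
      (fun s => (x / y) ^ (μ / 2) * ((1 - μ / 2) * s + μ / 2 * (x * y * -s⁻¹)))
      ((x / y) ^ (μ / 2) * ((1 - μ / 2) + μ / 2 * (x * y / s ^ 2))) (Icc x y) s := fun s hs => by
    refine ((((hasDerivWithinAt_id s _).const_mul _).add
      (((((hasDerivAt_inv (hpos s hs).ne').neg).hasDerivWithinAt).const_mul
        (x * y)).const_mul (μ / 2))).const_mul _).congr_deriv ?_
    ring
  have hright : ContinuousOn
      (fun s => (x / y) ^ (μ / 2) * ((1 - μ / 2) + μ / 2 * (x * y / s ^ 2))) (Icc x y) :=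
    continuousOn_const.mul (continuousOn_const.add (continuousOn_const.mul
      (continuousOn_const.div (continuousOn_id.pow 2) fun s hs => pow_ne_zero 2 (hpos s hs).ne')))
  calc ∫ s in x..y, (x / s) ^ μ
      ≤ ∫ s in x..y, (x / y) ^ (μ / 2) * ((1 - μ / 2) + μ / 2 * (x * y / s ^ 2)) :=
        integral_mono_on hxy ((continuousOn_div_rpow μ hx).intervalIntegrable_of_Icc hxy)
          (hright.intervalIntegrable_of_Icc hxy)
          fun s hs => div_rpow_le_interpolation hx (hpos s hs) hy hμ hμ2
    _ = (x / y) ^ (μ / 2) * (y - x) := by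
        rw [integral_eq_sub_of_hasDerivWithinAt_Icc hxy hprim hright]
        field_simp
        ring

theorem eight_mul_frequency_sq_le (hx : 0 < x) (hxy : x ≤ y) (hlam : 0 ≤ lam)
    (hlamy : lam * y ≤ 1 / 2) (hμ2 : μ ≤ 2) : 8 * lam ^ 2 ≤ 2 / x ^ 2 * (x / y) ^ μ := by
  have hy : 0 < y := hx.trans_le hxy
  calc 8 * lam ^ 2 = 8 * (lam * y) ^ 2 / y ^ 2 := by field_simp
    _ ≤ 8 * (1 / 2) ^ 2 / y ^ 2 := by gcongr
    _ = 2 / x ^ 2 * (x / y) ^ (2 : ℝ) := by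
        rw [rpow_two]
        field_simp
        norm_num
    _ ≤ 2 / x ^ 2 * (x / y) ^ μ := by
        have := rpow_le_rpow_of_exponent_ge (by positivity) ((div_le_one hy).2 hxy) hμ2
        gcongr

theorem nonneg_of_exp_neg_integral_le (hx : 0 < x) (hxy : x ≤ y)
    (hD : ∀ s ∈ Icc x y, exp (-∫ t in x..s, b t) ≤ D * (x / s) ^ μ) : 0 ≤ D := by
  have h := (exp_pos _).le.trans (hD x (left_mem_Icc.2 hxy))
  rwa [div_self hx.ne', one_rpow, mul_one] at h

theorem sq_add_sq_le_of_le_add {Y Z k : ℝ} (hZ : 0 ≤ Z) (hk : 0 ≤ k)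
    (h : k ≤ Y + Z / 2 + k / 8) : (Z + k / 2) ^ 2 + k ^ 2 ≤ 4 * Z ^ 2 + 8 * Y ^ 2 := by
  have hk' : k ≤ 8 / 7 * (Y + Z / 2) := by linarith
  calc (Z + k / 2) ^ 2 + k ^ 2
      ≤ (Z + 8 / 7 * (Y + Z / 2) / 2) ^ 2 + (8 / 7 * (Y + Z / 2)) ^ 2 := by gcongr
    _ ≤ 4 * Z ^ 2 + 8 * Y ^ 2 := by nlinarith [sq_nonneg (Z - Y), sq_nonneg Y, sq_nonneg Z]

namespace IsClassicalSolOn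

theorem abs_velocity_le {M s : ℝ} (h : IsClassicalSolOn (Icc x y) b lam u v)
    (hb : ContinuousOn b (Icc x y)) (hb0 : ∀ t ∈ Icc x y, 0 ≤ b t)
    (hM : ∀ t ∈ Icc x y, |u t| ≤ M) (hs : s ∈ Icc x y) :
    |v s| ≤ |v x| * exp (-∫ t in x..s, b t) + lam ^ 2 * M * (s - x) := by
  set p : ℝ → ℝ := fun s => ∫ t in x..s, b t
  have hexp : ∀ t ∈ Icc x y,
      HasDerivWithinAt (fun t => exp (p t)) (exp (p t) * b t) (Icc x y) t := fun t ht =>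
    (hasDerivWithinAt_integral_Icc hb ht).exp
  have hf : ∀ t ∈ Icc x y, HasDerivWithinAt (fun t => exp (p t) * v t)
      (-(exp (p t) * (lam ^ 2 * u t))) (Icc x y) t := fun t ht =>
    ((hexp t ht).mul (h t ht).2).congr_deriv (by ring)
  have hB : ∀ t ∈ Icc x y,
      HasDerivWithinAt (fun t => |v x| + lam ^ 2 * M * ((t - x) * exp (p t)))
        (lam ^ 2 * M * (exp (p t) + (t - x) * (exp (p t) * b t))) (Icc x y) t := fun t ht =>
    (((((hasDerivWithinAt_id t _).sub_const x).mul (hexp t ht)).const_mul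
      (lam ^ 2 * M)).const_add |v x|).congr_deriv (by rw [one_mul]; rfl)
  have hbound := image_norm_le_of_norm_deriv_right_le_deriv_boundary'
    (fun t ht => (hf t ht).continuousWithinAt)
    (fun t ht => (hf t (Ico_subset_Icc_self ht)).mono_of_mem_nhdsWithin (Icc_mem_nhdsGE_of_mem ht))
    (by simp [p])
    (fun t ht => (hB t ht).continuousWithinAt)
    (fun t ht => (hB t (Ico_subset_Icc_self ht)).mono_of_mem_nhdsWithin (Icc_mem_nhdsGE_of_mem ht))
    (fun t ht => ?_) hs
  · rw [norm_eq_abs, abs_mul, abs_exp] at hbound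
    calc |v s| = exp (-p s) * (exp (p s) * |v s|) := by
          rw [← mul_assoc, ← exp_add, neg_add_cancel, exp_zero, one_mul]
      _ ≤ exp (-p s) * (|v x| + lam ^ 2 * M * ((s - x) * exp (p s))) := by gcongr
      _ = |v x| * exp (-p s) + lam ^ 2 * M * (s - x) * (exp (-p s) * exp (p s)) := by ring
      _ = |v x| * exp (-p s) + lam ^ 2 * M * (s - x) := by
          rw [← exp_add, neg_add_cancel, exp_zero, mul_one]
  · have htI := Ico_subset_Icc_self ht
    have hM0 : 0 ≤ M := (abs_nonneg _).trans (hM t htI)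
    have hdamp : 0 ≤ (t - x) * (exp (p t) * b t) :=
      mul_nonneg (sub_nonneg.2 ht.1) (mul_nonneg (exp_pos _).le (hb0 t htI))
    rw [norm_eq_abs, abs_neg, abs_mul, abs_exp, abs_mul, abs_of_nonneg (sq_nonneg lam)]
    calc exp (p t) * (lam ^ 2 * |u t|) ≤ exp (p t) * (lam ^ 2 * M) := by
          gcongr; exact hM t htI
      _ = lam ^ 2 * M * exp (p t) := by ring
      _ ≤ lam ^ 2 * M * (exp (p t) + (t - x) * (exp (p t) * b t)) := by
          gcongr; exact le_add_of_nonneg_right hdamp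

theorem abs_position_le_add_integral {s : ℝ} (h : IsClassicalSolOn (Icc x y) b lam u v)
    (hs : s ∈ Icc x y) : |u s| ≤ |u x| + ∫ t in x..y, |v t| := by
  have hv := h.continuousOn_velocity
  have hsub : Icc x s ⊆ Icc x y := Icc_subset_Icc_right hs.2
  have hdiff : u s - u x = ∫ t in x..s, v t := (integral_eq_sub_of_hasDerivWithinAt_Icc hs.1
    (fun t ht => (h.mono hsub t ht).1) (hv.mono hsub)).symm
  have hdist : |u s - u x| ≤ ∫ t in x..y, |v t| := by
    rw [hdiff]
    exact (intervalIntegral.abs_integral_le_integral_abs hs.1).trans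
      (integral_mono_interval le_rfl hs.1 hs.2 (Filter.Eventually.of_forall fun t => abs_nonneg _)
        (hv.abs.intervalIntegrable_of_Icc (hs.1.trans hs.2)))
  linarith [abs_sub_abs_le_abs_sub (u s) (u x)]

theorem abs_position_le {M s : ℝ} (h : IsClassicalSolOn (Icc x y) b lam u v) (hx : 0 < x)
    (hμ : 0 ≤ μ) (hμ2 : μ ≤ 2) (hb : ContinuousOn b (Icc x y)) (hb0 : ∀ t ∈ Icc x y, 0 ≤ b t)
    (hD : ∀ s ∈ Icc x y, exp (-∫ t in x..s, b t) ≤ D * (x / s) ^ μ)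
    (hM : ∀ t ∈ Icc x y, |u t| ≤ M) (hs : s ∈ Icc x y) :
    |u s| ≤ |u x| + |v x| * D * (x / y) ^ (μ / 2) * (y - x) + lam ^ 2 * M * (y - x) ^ 2 / 2 := by
  have hxy : x ≤ y := hs.1.trans hs.2
  have hD0 : 0 ≤ D := nonneg_of_exp_neg_integral_le hx hxy hD
  have hdecay : IntervalIntegrable (fun s => |v x| * D * (x / s) ^ μ) volume x y :=
    ((continuousOn_div_rpow μ hx).intervalIntegrable_of_Icc hxy).const_mul _
  have hforce : IntervalIntegrable (fun s => lam ^ 2 * M * (s - x)) volume x y :=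
    (by fun_prop : Continuous fun s => lam ^ 2 * M * (s - x)).intervalIntegrable x y
  have hvint : ∫ t in x..y, |v t| ≤
      |v x| * D * ((x / y) ^ (μ / 2) * (y - x)) + lam ^ 2 * M * ((y - x) ^ 2 / 2) := by
    calc ∫ t in x..y, |v t| ≤ ∫ t in x..y, |v x| * D * (x / t) ^ μ + lam ^ 2 * M * (t - x) := by
          refine integral_mono_on hxy (h.continuousOn_velocity.abs.intervalIntegrable_of_Icc hxy)
            (hdecay.add hforce) fun t ht => (h.abs_velocity_le hb hb0 hM ht).trans ?_
          rw [mul_assoc |v x|]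
          gcongr
          exact hD t ht
      _ = |v x| * D * (∫ t in x..y, (x / t) ^ μ) + lam ^ 2 * M * ((y - x) ^ 2 / 2) := by
          rw [intervalIntegral.integral_add hdecay hforce, intervalIntegral.integral_const_mul,
            intervalIntegral.integral_const_mul, integral_comp_sub_right (fun t => t), integral_id]
          ring
      _ ≤ _ := by gcongr; exact integral_div_rpow_le hx hxy hμ hμ2
  linarith [h.abs_position_le_add_integral hs]

theorem exists_forall_abs_position_le (h : IsClassicalSolOn (Icc x y) b lam u v) (hx : 0 < x)
    (hxy : x ≤ y) (hlam : 0 ≤ lam) (hlamy : lam * y ≤ 1 / 2) (hμ : 0 ≤ μ) (hμ2 : μ ≤ 2)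
    (hb : ContinuousOn b (Icc x y)) (hb0 : ∀ t ∈ Icc x y, 0 ≤ b t)
    (hD : ∀ s ∈ Icc x y, exp (-∫ t in x..s, b t) ≤ D * (x / s) ^ μ) :
    ∃ M, (∀ t ∈ Icc x y, |u t| ≤ M) ∧
      lam * M ≤ lam * |u x| + |v x| * D * (x / y) ^ (μ / 2) / 2 + lam * M / 8 := by
  obtain ⟨m, hm, hmax⟩ :=
    isCompact_Icc.exists_isMaxOn (nonempty_Icc.2 hxy) h.continuousOn_position.abs
  have hM : ∀ t ∈ Icc x y, |u t| ≤ |u m| := fun t ht => hmax ht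
  have hD0 : 0 ≤ D := nonneg_of_exp_neg_integral_le hx hxy hD
  have hy : 0 < y := hx.trans_le hxy
  have hlamyx : lam * (y - x) ≤ 1 / 2 := by nlinarith
  have := sub_nonneg.2 hxy
  refine ⟨|u m|, hM, ?_⟩
  set Z := |v x| * D * (x / y) ^ (μ / 2)
  calc lam * |u m| ≤ lam * (|u x| + Z * (y - x) + lam ^ 2 * |u m| * (y - x) ^ 2 / 2) := by
        gcongr
        exact h.abs_position_le hx hμ hμ2 hb hb0 hD hM hm
    _ = lam * |u x| + Z * (lam * (y - x)) + lam * |u m| * (lam * (y - x)) ^ 2 / 2 := by ring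
    _ ≤ lam * |u x| + Z * (1 / 2) + lam * |u m| * (1 / 2) ^ 2 / 2 := by gcongr
    _ = lam * |u x| + Z / 2 + lam * |u m| / 8 := by ring

theorem abs_velocity_le_of_le_half {M : ℝ} (h : IsClassicalSolOn (Icc x y) b lam u v)
    (hx : 0 < x) (hxy : x ≤ y) (hlam : 0 ≤ lam) (hlamy : lam * y ≤ 1 / 2) (hμ : 0 ≤ μ)
    (hb : ContinuousOn b (Icc x y)) (hb0 : ∀ t ∈ Icc x y, 0 ≤ b t)
    (hD : ∀ s ∈ Icc x y, exp (-∫ t in x..s, b t) ≤ D * (x / s) ^ μ)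
    (hM : ∀ t ∈ Icc x y, |u t| ≤ M) :
    |v y| ≤ |v x| * D * (x / y) ^ (μ / 2) + lam * M / 2 := by
  have hyI : y ∈ Icc x y := right_mem_Icc.2 hxy
  have hy : 0 < y := hx.trans_le hxy
  have hM0 : 0 ≤ M := (abs_nonneg _).trans (hM y hyI)
  have hD0 : 0 ≤ D := nonneg_of_exp_neg_integral_le hx hxy hD
  calc |v y| ≤ |v x| * exp (-∫ t in x..y, b t) + lam ^ 2 * M * (y - x) :=
        h.abs_velocity_le hb hb0 hM hyI
    _ = |v x| * exp (-∫ t in x..y, b t) + lam * M * (lam * (y - x)) := by ring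
    _ ≤ |v x| * (D * (x / y) ^ (μ / 2)) + lam * M * (1 / 2) := by
        gcongr
        · refine (hD y hyI).trans (mul_le_mul_of_nonneg_left ?_ hD0)
          exact rpow_le_rpow_of_exponent_ge (by positivity) ((div_le_one hy).2 hxy) (by linarith)
        · nlinarith
    _ = |v x| * D * (x / y) ^ (μ / 2) + lam * M / 2 := by ring

theorem energy_le_of_le_half (h : IsClassicalSolOn (Icc x y) b lam u v) (hx : 0 < x) (hxy : x ≤ y)
    (hlam : 0 ≤ lam) (hlamy : lam * y ≤ 1 / 2) (hμ : 0 ≤ μ) (hμ2 : μ ≤ 2)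
    (hb : ContinuousOn b (Icc x y)) (hb0 : ∀ t ∈ Icc x y, 0 ≤ b t)
    (hD : ∀ s ∈ Icc x y, exp (-∫ t in x..s, b t) ≤ D * (x / s) ^ μ) :
    energy lam u v y ≤ (4 * D ^ 2 * v x ^ 2 + 2 / x ^ 2 * u x ^ 2) * (x / y) ^ μ := by
  have hD0 : 0 ≤ D := nonneg_of_exp_neg_integral_le hx hxy hD
  have hy : 0 < y := hx.trans_le hxy
  obtain ⟨M, hM, hlamM⟩ := h.exists_forall_abs_position_le hx hxy hlam hlamy hμ hμ2 hb hb0 hD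
  have hM0 : 0 ≤ M := (abs_nonneg _).trans (hM y (right_mem_Icc.2 hxy))
  have hvel := h.abs_velocity_le_of_le_half hx hxy hlam hlamy hμ hb hb0 hD hM
  have hpos : lam * |u y| ≤ lam * M :=
    mul_le_mul_of_nonneg_left (hM y (right_mem_Icc.2 hxy)) hlam
  have hq : ((x / y) ^ (μ / 2)) ^ 2 = (x / y) ^ μ := by
    rw [← rpow_natCast, ← rpow_mul (by positivity)]
    norm_num
  calc energy lam u v y = |v y| ^ 2 + (lam * |u y|) ^ 2 := by
        rw [mul_pow, sq_abs, sq_abs, energy]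
    _ ≤ (|v x| * D * (x / y) ^ (μ / 2) + lam * M / 2) ^ 2 + (lam * M) ^ 2 := by gcongr
    _ ≤ 4 * (|v x| * D * (x / y) ^ (μ / 2)) ^ 2 + 8 * (lam * |u x|) ^ 2 :=
        sq_add_sq_le_of_le_add (by positivity) (by positivity) hlamM
    _ = 4 * D ^ 2 * v x ^ 2 * (x / y) ^ μ + 8 * lam ^ 2 * u x ^ 2 := by
        rw [mul_pow, mul_pow, mul_pow, hq, sq_abs, sq_abs]
        ring
    _ ≤ 4 * D ^ 2 * v x ^ 2 * (x / y) ^ μ + 2 / x ^ 2 * (x / y) ^ μ * u x ^ 2 := by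
        have := eight_mul_frequency_sq_le hx hxy hlam hlamy hμ2
        gcongr _ + ?_ * _
    _ = (4 * D ^ 2 * v x ^ 2 + 2 / x ^ 2 * u x ^ 2) * (x / y) ^ μ := by ring

end IsClassicalSolOn

end LowFrequency

section Decay

variable {a r α lam x y : ℝ} {u v : ℝ → ℝ}

theorem exp_neg_integral_oscDamping_le (hr : 0 ≤ r) (hα : 1 ≤ α) (hx : 0 < x) (hxy : x ≤ y) :
    exp (-∫ t in x..y, oscDamping a r α t) ≤ exp (2 * r / (α * x ^ α)) * (x / y) ^ a := by
  have hy : 0 < y := hx.trans_le hxy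
  have hint : ∀ (k : ℝ) {f : ℝ → ℝ}, ContinuousOn f (Icc x y) →
      IntervalIntegrable (fun t => k * (f t / t)) volume x y :=
    fun k _ hf => ((continuousOn_div_id hx hf).intervalIntegrable_of_Icc hxy).const_mul k
  have hsin : ContinuousOn (fun t => sin (t ^ α)) (Icc x y) := fun t ht =>
    (hasDerivWithinAt_rpow_Icc α hx t ht).sin.continuousWithinAt
  have hsplit : ∫ t in x..y, oscDamping a r α t =
      a * log (y / x) + r * ∫ t in x..y, sin (t ^ α) / t := by
    rw [← integral_one_div_of_pos hx hy, ← intervalIntegral.integral_const_mul,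
      ← intervalIntegral.integral_const_mul,
      ← intervalIntegral.integral_add (hint a continuousOn_const) (hint r hsin)]
    congr 1
    funext t
    rw [oscDamping]
    ring
  rw [rpow_def_of_pos (div_pos hx hy), ← exp_add, exp_le_exp, hsplit, ← inv_div y x, log_inv,
    mul_comm 2 r, mul_div_assoc]
  linarith [mul_le_mul_of_nonneg_left (neg_integral_sin_rpow_div_le hα hx hxy) hr]

theorem exists_mem_Icc_threshold (lam : ℝ) (hxy : x ≤ y) :
    ∃ m ∈ Icc x y, (m = x ∨ lam * m ≤ 1 / 2) ∧ (m = y ∨ 1 / 2 ≤ lam * m) := by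
  rcases le_total (1 / 2) (lam * x) with hx | hx
  · exact ⟨x, left_mem_Icc.2 hxy, Or.inl rfl, Or.inr hx⟩
  rcases le_total (lam * y) (1 / 2) with hy | hy
  · exact ⟨y, right_mem_Icc.2 hxy, Or.inr hy, Or.inl rfl⟩
  obtain ⟨m, hm, hlm⟩ := intermediate_value_Icc hxy
    (continuous_const_mul lam).continuousOn ⟨hx, hy⟩
  exact ⟨m, hm, Or.inr hlm.le, Or.inr hlm.ge⟩

theorem tail_exponent_le {t0 : ℝ} (hr : 0 ≤ r) (hra : r ≤ a) (hα : 1 < α) (ht0 : 0 < t0)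
    (hx : t0 ≤ x) :
    (a + 5 * r / 2) * (2 + (a + r)) + 2 * r / (α * x ^ α) + r / 2 * (log 3 / (α - 1)) ≤
      a * (a + r + 8) + 5 * r * (a + r + 4) / 2 + 3 * r / (α * t0 ^ α) +
        r * log 3 / (α - 1) := by
  have hosc : 2 * r / (α * x ^ α) ≤ 3 * r / (α * t0 ^ α) := by
    gcongr
    norm_num
  have hresonance : 0 ≤ r * log 3 / (α - 1) := by
    have := sub_pos.2 hα
    positivity
  have hhalf : r / 2 * (log 3 / (α - 1)) = r * log 3 / (α - 1) / 2 := by ring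
  linarith

namespace IsClassicalSolOn

theorem energy_le_initial (h : IsClassicalSolOn (Icc x y) (oscDamping a r α) lam u v)
    (hr : 0 ≤ r) (hra : r ≤ a) (hα : 1 ≤ α) (hlam : 0 ≤ lam) (hx : 0 < x) (hxy : x ≤ y)
    (hlamy : y = x ∨ lam * y ≤ 1 / 2) :
    energy lam u v y ≤ (4 * exp (2 * (2 * r / (α * x ^ α))) * v x ^ 2 +
      (lam ^ 2 + 2 / x ^ 2) * u x ^ 2) * (x / y) ^ min a 2 := by
  have : 0 < α := zero_lt_one.trans_le hα
  have hexp : 1 ≤ exp (2 * (2 * r / (α * x ^ α))) := one_le_exp (by positivity)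
  rcases hlamy with rfl | hlamy
  · rw [div_self hx.ne', one_rpow, mul_one, energy]
    gcongr
    · exact le_mul_of_one_le_left (sq_nonneg _) (by linarith)
    · exact le_add_of_nonneg_right (by positivity)
  have hpos : ∀ t ∈ Icc x y, 0 < t := fun t ht => hx.trans_le ht.1
  have hlow := h.energy_le_of_le_half hx hxy hlam hlamy (le_min (hr.trans hra) zero_le_two)
    (min_le_right a 2) ((continuousOn_oscDamping a r α).mono hpos)
    (fun t ht => oscDamping_nonneg hr hra (hpos t ht)) fun s hs =>
      (exp_neg_integral_oscDamping_le hr hα hx hs.1).trans <| mul_le_mul_of_nonneg_left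
        (rpow_le_rpow_of_exponent_ge (div_pos hx (hpos s hs)) ((div_le_one (hpos s hs)).2 hs.1)
          (min_le_left a 2)) (exp_pos _).le
  rw [← exp_nat_mul, Nat.cast_two] at hlow
  have hy := hx.trans_le hxy
  refine hlow.trans ?_
  gcongr
  exact le_add_of_nonneg_left (sq_nonneg lam)

theorem energy_le_mul_energy (h : IsClassicalSolOn (Icc x y) (oscDamping a r α) lam u v)
    (hr : 0 ≤ r) (hra : r ≤ a) (hα : 1 < α) (hx : 0 < x) (hxy : x ≤ y)
    (hlamx : x = y ∨ 1 / 2 ≤ lam * x) :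
    energy lam u v y ≤
      exp ((a + 5 * r / 2) * (2 + (a + r)) + 2 * r / (α * x ^ α) + r / 2 * (log 3 / (α - 1))) *
        energy lam u v x * (x / y) ^ min a 2 := by
  have hE := energy_nonneg lam u v x
  rcases hlamx with rfl | hlamx
  · have ha : 0 ≤ a := hr.trans hra
    have : 0 < α - 1 := sub_pos.2 hα
    rw [div_self hx.ne', one_rpow, mul_one]
    exact le_mul_of_one_le_left hE (one_le_exp (by positivity))
  · refine (h.energy_le_of_half_le hr hra hα hx hxy hlamx).trans
      (mul_le_mul_of_nonneg_left ?_ (by positivity))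
    exact rpow_le_rpow_of_exponent_ge (div_pos hx (hx.trans_le hxy))
      ((div_le_one (hx.trans_le hxy)).2 hxy) (min_le_left a 2)

end IsClassicalSolOn

end Decay

theorem decay_fast_oscillations_ODE
    (t0 a r α lam : ℝ) (ht0 : 0 < t0) (ha : 0 < a) (hr0 : 0 ≤ r) (hra : r ≤ a)
    (hα : 1 < α) (hlam : 0 ≤ lam)
    (u u' : ℝ → ℝ)
    (hu : IsDampedSol t0 (fun t => (a + r * Real.sin (t ^ α)) / t) lam u u') :
    ∀ t ≥ t0,
      u' t ^ 2 + lam ^ 2 * u t ^ 2 ≤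
        Real.exp (a * (a + r + 8) + 5 * r * (a + r + 4) / 2
            + 3 * r / (α * t0 ^ α) + r * Real.log 3 / (α - 1)) *
          (4 * Real.exp (2 * (3 * r / (α * t0 ^ α))) * u' t0 ^ 2 +
            (lam ^ 2 + 2 / t0 ^ 2) * u t0 ^ 2) *
          (t0 / t) ^ (min a 2) := by
  intro t ht
  have h : IsClassicalSolOn (Icc t0 t) (oscDamping a r α) lam u u' := hu.isClassicalSolOn
    ((continuousOn_oscDamping a r α).mono fun s hs => ht0.trans_le hs) t
  obtain ⟨x, hx, hlow, hhigh⟩ := exists_mem_Icc_threshold lam ht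
  have hx0 : 0 < x := ht0.trans_le hx.1
  have hinitial : energy lam u u' x ≤ (4 * exp (2 * (3 * r / (α * t0 ^ α))) * u' t0 ^ 2 +
      (lam ^ 2 + 2 / t0 ^ 2) * u t0 ^ 2) * (t0 / x) ^ min a 2 :=
    ((h.mono (Icc_subset_Icc_right hx.2)).energy_le_initial hr0 hra hα.le hlam ht0 hx.1 hlow).trans
      (by gcongr; norm_num)
  have htail := (h.mono (Icc_subset_Icc_left hx.1)).energy_le_mul_energy hr0 hra hα hx0 hx.2 hhigh
  have hpow : (t0 / x) ^ min a 2 * (x / t) ^ min a 2 = (t0 / t) ^ min a 2 := by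
    rw [← mul_rpow (by positivity) (div_nonneg hx0.le (hx0.trans_le hx.2).le),
      div_mul_div_cancel₀ hx0.ne']
  calc energy lam u u' t ≤ _ := htail
    _ ≤ _ := mul_le_mul_of_nonneg_right
        (mul_le_mul (exp_le_exp.2 (tail_exponent_le hr0 hra hα ht0 hx.1)) hinitial
          (energy_nonneg lam u u' x) (exp_pos _).le)
        (rpow_nonneg (div_nonneg hx0.le (ht0.le.trans ht)) _)
    _ = _ := by rw [← hpow]; ring
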